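/- arXiv:1001.1369 — 3 statements merged into one kernel-verified Lean document; each statement's English description precedes it below -/
import Mathlib

section
/- Let d ≥ 1 and let x_1, …, x_{d+1} ∈ ℝ^d be affinely independent points, let τ = conv{x_1, …, x_{d+1}} be the closed simplex with these vertices, and let |τ| denote its d-dimensional Lebesgue measure. Then for every affine function g : ℝ^d → ℝ, the element mass-matrix formula holds: ∫_τ g(x)² dx = (|τ| / ((d+1)(d+2))) · ( ∑_{i=1}^{d+1} g(x_i)² + ( ∑_{i=1}^{d+1} g(x_i) )² ). -/
open MeasureTheory

section Bisection

variable {ι E : Type*} [NormedAddCommGroup E] [NormedSpace ℝ E]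

/-- The affine map replacing the vertex `b i` by the midpoint of `b i` and `b j`, and fixing the
other vertices. -/
noncomputable def AffineBasis.bisect (b : AffineBasis ι ℝ E) (i j : ι) (y : E) : E :=
  y + b.coord i y • ((1 / 2 : ℝ) • (b j - b i))

theorem AffineBasis.coord_bisect (b : AffineBasis ι ℝ E) (i j k : ι) (y : E) :
    b.coord k (b.bisect i j y) =
      b.coord k y + b.coord i y / 2 * (b.coord k (b j) - b.coord k (b i)) := by
  have h := (b.coord k).linearMap_vsub (b j) (b i)
  simp only [vsub_eq_sub] at h
  rw [AffineBasis.bisect, add_comm y, ← vadd_eq_add, AffineMap.map_vadd, map_smul, map_smul, h]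
  simp only [smul_eq_mul, vadd_eq_add]
  ring

theorem AffineBasis.coord_bisect_left (b : AffineBasis ι ℝ E) {i j : ι} (hij : i ≠ j) (y : E) :
    b.coord i (b.bisect i j y) = b.coord i y / 2 := by
  rw [b.coord_bisect, b.coord_apply_ne hij, b.coord_apply_eq]; ring

theorem AffineBasis.coord_bisect_right (b : AffineBasis ι ℝ E) {i j : ι} (hij : i ≠ j) (y : E) :
    b.coord j (b.bisect i j y) = b.coord j y + b.coord i y / 2 := by
  rw [b.coord_bisect, b.coord_apply_ne hij.symm, b.coord_apply_eq]; ring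

theorem AffineBasis.coord_bisect_of_ne (b : AffineBasis ι ℝ E) {i j k : ι} (hki : k ≠ i)
    (hkj : k ≠ j) (y : E) : b.coord k (b.bisect i j y) = b.coord k y := by
  rw [b.coord_bisect, b.coord_apply_ne hki, b.coord_apply_ne hkj]; ring

/-- The preimage under the bisection map of one half of the simplex is the whole simplex. -/
theorem AffineBasis.bisect_preimage_convexHull (b : AffineBasis ι ℝ E) {i j : ι} (hij : i ≠ j) :
    b.bisect i j ⁻¹' (convexHull ℝ (Set.range b) ∩ {y | b.coord i y ≤ b.coord j y}) =
      convexHull ℝ (Set.range b) := by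
  ext y
  simp only [b.convexHull_eq_nonneg_coord, Set.mem_preimage, Set.mem_inter_iff, Set.mem_ofPred_eq,
    b.coord_bisect_left hij, b.coord_bisect_right hij]
  constructor
  · rintro ⟨h, h'⟩ k
    by_cases hki : k = i
    · have := h i
      rw [b.coord_bisect_left hij] at this
      subst hki; linarith
    by_cases hkj : k = j
    · subst hkj; linarith
    simpa only [b.coord_bisect_of_ne hki hkj] using h k
  · refine fun h => ⟨fun k => ?_, by linarith [h j]⟩
    by_cases hki : k = i
    · rw [hki, b.coord_bisect_left hij]; linarith [h i]
    by_cases hkj : k = j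
    · rw [hkj, b.coord_bisect_right hij]; linarith [h i, h j]
    simpa only [b.coord_bisect_of_ne hki hkj] using h k

theorem AffineBasis.isCompact_convexHull [Finite ι] (b : AffineBasis ι ℝ E) :
    IsCompact (convexHull ℝ (Set.range b)) :=
  (Set.finite_range b).isCompact_convexHull ℝ

variable [FiniteDimensional ℝ E]

theorem AffineBasis.continuous_bisect (b : AffineBasis ι ℝ E) (i j : ι) :
    Continuous (b.bisect i j) :=
  continuous_id.add ((continuous_barycentric_coord b i).smul continuous_const)

variable [MeasurableSpace E] [BorelSpace E] (μ : Measure E) [μ.IsAddHaarMeasure]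

theorem AffineBasis.map_bisect (b : AffineBasis ι ℝ E) {i j : ι} (hij : i ≠ j) :
    μ.map (b.bisect i j) = (2 : ENNReal) • μ := by
  set L : E →ₗ[ℝ] E :=
    LinearMap.transvection (b.coord i).linear ((1 / 2 : ℝ) • (b j - b i)) with hL
  have hdet : LinearMap.det L = 1 / 2 := by
    have h := (b.coord i).linearMap_vsub (b j) (b i)
    simp only [vsub_eq_sub, b.coord_apply_ne hij, b.coord_apply_eq] at h
    rw [hL, LinearMap.transvection.det, map_smul, h, smul_eq_mul]
    norm_num
  have hT : b.bisect i j =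
      (fun y => y + b.coord i 0 • ((1 / 2 : ℝ) • (b j - b i))) ∘ L := by
    ext y
    have h := congrFun (b.coord i).decomp y
    simp only [Pi.add_apply] at h
    simp only [AffineBasis.bisect, Function.comp, hL, LinearMap.transvection.apply, h, add_smul]
    abel
  rw [hT, ← Measure.map_map (measurable_add_const _)
    L.continuous_of_finiteDimensional.measurable,
    Measure.map_linearMap_addHaar_eq_smul_addHaar μ (by rw [hdet]; norm_num), Measure.map_smul,
    map_add_right_eq_self, hdet]
  norm_num

theorem AffineBasis.measurableSet_convexHull_inter_coord_le [Finite ι] (b : AffineBasis ι ℝ E)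
    (i j : ι) :
    MeasurableSet (convexHull ℝ (Set.range b) ∩ {y | b.coord i y ≤ b.coord j y}) :=
  (b.isCompact_convexHull.isClosed.inter
    (isClosed_le (continuous_barycentric_coord b i) (continuous_barycentric_coord b j)))
    |>.measurableSet

theorem AffineBasis.setIntegral_bisect [Finite ι] (b : AffineBasis ι ℝ E) {i j : ι} (hij : i ≠ j)
    {f : E → ℝ} (hf : Continuous f) :
    ∫ y in convexHull ℝ (Set.range b), f (b.bisect i j y) ∂μ =
      2 * ∫ y in convexHull ℝ (Set.range b) ∩ {y | b.coord i y ≤ b.coord j y}, f y ∂μ := by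
  have h := setIntegral_map (μ := μ) (b.measurableSet_convexHull_inter_coord_le i j)
    hf.aestronglyMeasurable (b.continuous_bisect i j).aemeasurable
  rw [b.bisect_preimage_convexHull hij, b.map_bisect μ hij, Measure.restrict_smul,
    integral_smul_measure] at h
  simpa using h.symm

theorem AffineBasis.measure_coord_eq_coord (b : AffineBasis ι ℝ E) {i j : ι} (hij : i ≠ j) :
    μ {y | b.coord i y = b.coord j y} = 0 := by
  let S : AffineSubspace ℝ E := (AffineSubspace.mk' (0 : ℝ) ⊥).comap (b.coord i - b.coord j)
  have hS : {y | b.coord i y = b.coord j y} = (S : Set E) := by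
    ext y
    simp [S, sub_eq_zero]
  rw [hS]
  refine Measure.addHaar_affineSubspace μ S fun h => ?_
  have : b i ∈ {y | b.coord i y = b.coord j y} := by
    rw [hS, h]; trivial
  simp [b.coord_apply_ne hij.symm] at this

theorem AffineBasis.setIntegral_bisect_add [Finite ι] (b : AffineBasis ι ℝ E) {i j : ι}
    (hij : i ≠ j) {f : E → ℝ} (hf : Continuous f) :
    2 * ∫ y in convexHull ℝ (Set.range b), f y ∂μ =
      (∫ y in convexHull ℝ (Set.range b), f (b.bisect i j y) ∂μ) +
        ∫ y in convexHull ℝ (Set.range b), f (b.bisect j i y) ∂μ := by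
  have hint : IntegrableOn f (convexHull ℝ (Set.range b)) μ :=
    hf.continuousOn.integrableOn_compact b.isCompact_convexHull
  rw [b.setIntegral_bisect μ hij hf, b.setIntegral_bisect μ hij.symm hf, ← mul_add,
    ← setIntegral_union₀ _ (b.measurableSet_convexHull_inter_coord_le j i).nullMeasurableSet
      (hint.mono_set Set.inter_subset_left) (hint.mono_set Set.inter_subset_left),
    ← Set.inter_union_distrib_left]
  · congr 3
    symm
    rw [Set.inter_eq_left]
    intro y _
    simp only [Set.mem_union, Set.mem_ofPred_eq]
    exact le_total _ _
  · refine measure_mono_null (fun y hy => ?_) (b.measure_coord_eq_coord μ hij)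
    exact le_antisymm hy.1.2 hy.2.2

theorem AffineBasis.integrableOn_coord_mul_coord [Finite ι] (b : AffineBasis ι ℝ E) (i j : ι) :
    IntegrableOn (fun y => b.coord i y * b.coord j y) (convexHull ℝ (Set.range b)) μ :=
  ((continuous_barycentric_coord b i).mul (continuous_barycentric_coord b j)).continuousOn
    |>.integrableOn_compact
    b.isCompact_convexHull

theorem AffineBasis.four_mul_setIntegral_coord_mul_coord [Finite ι] (b : AffineBasis ι ℝ E)
    {i j : ι} (hij : i ≠ j) :
    4 * ∫ y in convexHull ℝ (Set.range b), b.coord i y * b.coord j y ∂μ =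
      (∫ y in convexHull ℝ (Set.range b), b.coord i y * b.coord i y ∂μ) +
        ∫ y in convexHull ℝ (Set.range b), b.coord j y * b.coord j y ∂μ := by
  have hb := b.integrableOn_coord_mul_coord μ
  have h := b.setIntegral_bisect_add μ hij (f := fun y => b.coord i y * b.coord j y)
    ((continuous_barycentric_coord b i).mul (continuous_barycentric_coord b j))
  simp only [b.coord_bisect_left hij, b.coord_bisect_right hij, b.coord_bisect_left hij.symm,
    b.coord_bisect_right hij.symm] at h
  have h₁ (y : E) : b.coord i y / 2 * (b.coord j y + b.coord i y / 2) =
      1 / 2 * (b.coord i y * b.coord j y) + 1 / 4 * (b.coord i y * b.coord i y) := by ring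
  have h₂ (y : E) : (b.coord i y + b.coord j y / 2) * (b.coord j y / 2) =
      1 / 2 * (b.coord i y * b.coord j y) + 1 / 4 * (b.coord j y * b.coord j y) := by ring
  simp only [h₁, h₂] at h
  rw [integral_add ((hb i j).const_mul _) ((hb i i).const_mul _),
    integral_add ((hb i j).const_mul _) ((hb j j).const_mul _)] at h
  simp only [integral_const_mul] at h
  linarith

theorem AffineBasis.setIntegral_coord_mul_self_eq [Finite ι] (b : AffineBasis ι ℝ E) (i j : ι) :
    ∫ y in convexHull ℝ (Set.range b), b.coord i y * b.coord i y ∂μ =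
      ∫ y in convexHull ℝ (Set.range b), b.coord j y * b.coord j y ∂μ := by
  rcases eq_or_ne i j with rfl | hij
  · rfl
  have hb := b.integrableOn_coord_mul_coord μ
  have h := b.setIntegral_bisect_add μ hij (f := fun y => b.coord i y * b.coord i y)
    ((continuous_barycentric_coord b i).mul (continuous_barycentric_coord b i))
  simp only [b.coord_bisect_left hij, b.coord_bisect_right hij.symm] at h
  have h₁ (y : E) : b.coord i y / 2 * (b.coord i y / 2) =
      1 / 4 * (b.coord i y * b.coord i y) := by ring
  have h₂ (y : E) : (b.coord i y + b.coord j y / 2) * (b.coord i y + b.coord j y / 2) =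
      1 * (b.coord i y * b.coord i y) + 1 * (b.coord i y * b.coord j y) +
        1 / 4 * (b.coord j y * b.coord j y) := by ring
  simp only [h₁, h₂] at h
  have hint : IntegrableOn
      (fun y => 1 * (b.coord i y * b.coord i y) + 1 * (b.coord i y * b.coord j y))
      (convexHull ℝ (Set.range b)) μ := ((hb i i).const_mul _).add ((hb i j).const_mul _)
  rw [integral_add hint ((hb j j).const_mul _),
    integral_add ((hb i i).const_mul _) ((hb i j).const_mul _)] at h
  simp only [integral_const_mul] at h
  linarith [b.four_mul_setIntegral_coord_mul_coord μ hij]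

theorem AffineBasis.setIntegral_sq_affineMap [Fintype ι] (b : AffineBasis ι ℝ E)
    (g : E →ᵃ[ℝ] ℝ) :
    ∫ y in convexHull ℝ (Set.range b), g y ^ 2 ∂μ =
      ∑ i, ∑ j, g (b i) * g (b j) *
        ∫ y in convexHull ℝ (Set.range b), b.coord i y * b.coord j y ∂μ := by
  have hg (y : E) : g y = ∑ i, g (b i) * b.coord i y := by
    conv_lhs => rw [← b.affineCombination_coord_eq_self y]
    rw [Finset.univ.map_affineCombination _ _ (b.sum_coord_apply_eq_one y),
      Finset.affineCombination_eq_linear_combination _ _ _ (b.sum_coord_apply_eq_one y)]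
    exact Finset.sum_congr rfl fun i _ => mul_comm _ _
  have hsq (y : E) : g y ^ 2 =
      ∑ i, ∑ j, g (b i) * g (b j) * (b.coord i y * b.coord j y) := by
    rw [hg, sq, Finset.sum_mul_sum]
    exact Finset.sum_congr rfl fun i _ => Finset.sum_congr rfl fun j _ => by ring
  have hint (i j : ι) := (b.integrableOn_coord_mul_coord μ i j).const_mul (g (b i) * g (b j))
  simp only [hsq]
  rw [integral_finsetSum _ fun i _ => integrable_finsetSum _ fun j _ => hint i j]
  simp only [integral_finsetSum _ fun j _ => hint _ j, integral_const_mul]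

/-- The mass-matrix formula for the simplex spanned by an affine basis. -/
theorem AffineBasis.setIntegral_sq_affineMap_eq [Fintype ι] (b : AffineBasis ι ℝ E)
    (g : E →ᵃ[ℝ] ℝ) :
    ∫ y in convexHull ℝ (Set.range b), g y ^ 2 ∂μ =
      μ.real (convexHull ℝ (Set.range b)) / (Fintype.card ι * (Fintype.card ι + 1)) *
        ((∑ i, g (b i) ^ 2) + (∑ i, g (b i)) ^ 2) := by
  classical
  obtain ⟨i₀⟩ := b.nonempty
  set A := ∫ y in convexHull ℝ (Set.range b), b.coord i₀ y * b.coord i₀ y ∂μ with hA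
  have hM (i j : ι) : ∫ y in convexHull ℝ (Set.range b), b.coord i y * b.coord j y ∂μ =
      A / 2 + if i = j then A / 2 else 0 := by
    split_ifs with hij
    · subst hij
      rw [b.setIntegral_coord_mul_self_eq μ i i₀]; ring
    · have := b.four_mul_setIntegral_coord_mul_coord μ hij
      rw [b.setIntegral_coord_mul_self_eq μ i i₀, b.setIntegral_coord_mul_self_eq μ j i₀] at this
      linarith
  have key (g : E →ᵃ[ℝ] ℝ) : ∫ y in convexHull ℝ (Set.range b), g y ^ 2 ∂μ =
      A / 2 * ((∑ i, g (b i) ^ 2) + (∑ i, g (b i)) ^ 2) := by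
    rw [b.setIntegral_sq_affineMap μ g]
    simp only [hM, mul_add, Finset.sum_add_distrib, mul_ite, mul_zero, Finset.sum_ite_eq,
      Finset.mem_univ, if_true, ← Finset.sum_mul, ← Finset.mul_sum]
    simp only [sq]
    ring
  have hvol := key (AffineMap.const ℝ E 1)
  simp only [AffineMap.const_apply, one_pow, integral_const, measureReal_restrict_apply_univ,
    Finset.sum_const, Finset.card_univ, nsmul_eq_mul, smul_eq_mul, mul_one] at hvol
  have hpos : (0 : ℝ) < Fintype.card ι := by
    exact_mod_cast Fintype.card_pos_iff.2 ⟨i₀⟩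
  rw [key, hvol]
  field_simp
  ring

end Bisection

/-- Element mass-matrix formula for an affine function on a
nondegenerate `d`-simplex `τ = conv{x_1, …, x_{d+1}}` in `ℝ^d`:
`∫_τ g² = (|τ| / ((d+1)(d+2))) · (∑ g(xᵢ)² + (∑ g(xᵢ))²)`. -/
theorem mass_matrix_formula_affine
    (d : ℕ) (hd : 1 ≤ d)
    (x : Fin (d + 1) → EuclideanSpace ℝ (Fin d))
    (hx : AffineIndependent ℝ x)
    (τ : Set (EuclideanSpace ℝ (Fin d)))
    (hτ : τ = convexHull ℝ (Set.range x))
    (g : EuclideanSpace ℝ (Fin d) →ᵃ[ℝ] ℝ) :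
    ∫ y in τ, (g y) ^ 2 =
      (volume τ).toReal / (((d : ℝ) + 1) * ((d : ℝ) + 2)) *
        ((∑ i, (g (x i)) ^ 2) + (∑ i, g (x i)) ^ 2) := by
  subst hτ
  let b : AffineBasis (Fin (d + 1)) ℝ (EuclideanSpace ℝ (Fin d)) :=
    ⟨x, hx, hx.affineSpan_eq_top_iff_card_eq_finrank_add_one.2 (by simp)⟩
  have h := b.setIntegral_sq_affineMap_eq volume g
  rw [Fintype.card_fin] at h
  push_cast at h
  rw [add_assoc (d : ℝ) 1 1, one_add_one_eq_two] at h
  exact h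
end

section
/- Let d ≥ 1, let x_1, …, x_{d+1} ∈ ℝ^d be affinely independent, and let τ be their closed convex hull with Lebesgue measure |τ| > 0. Then for every affine function g : ℝ^d → ℝ and every vertex x_k, the vertex value is controlled by the L²-norm over the simplex: g(x_k)² ≤ ((d+1)(d+2) / |τ|) · ∫_τ g(x)² dx. -/
open MeasureTheory

namespace AffineBasis

variable {ι E : Type*} [NormedAddCommGroup E] [NormedSpace ℝ E]

/-- The affine map sending the vertex `b j` to the midpoint of `b i` and `b j` and fixing all
other vertices of `b`. -/
noncomputable def halfEdge (b : AffineBasis ι ℝ E) (i j : ι) (y : E) : E :=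
  y + (b.coord j y / 2) • (b i - b j)

theorem coord_add_smul_sub (b : AffineBasis ι ℝ E) (k i j : ι) (y : E) (c : ℝ) :
    b.coord k (y + c • (b i - b j)) =
      b.coord k y + c * (b.coord k (b i) - b.coord k (b j)) := by
  have h := (b.coord k).map_vadd y (c • (b i - b j))
  have h' := (b.coord k).linearMap_vsub (b i) (b j)
  simp only [vsub_eq_sub, vadd_eq_add] at h h'
  rw [add_comm, h, map_smul, h', smul_eq_mul, add_comm]

theorem coord_halfEdge (b : AffineBasis ι ℝ E) (k i j : ι) (y : E) :
    b.coord k (b.halfEdge i j y) =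
      b.coord k y + b.coord j y / 2 * (b.coord k (b i) - b.coord k (b j)) :=
  b.coord_add_smul_sub k i j y _

theorem coord_halfEdge_fst (b : AffineBasis ι ℝ E) {i j : ι} (hij : i ≠ j) (y : E) :
    b.coord i (b.halfEdge i j y) = b.coord i y + b.coord j y / 2 := by
  rw [coord_halfEdge, coord_apply_eq, coord_apply_ne _ hij]; ring

theorem coord_halfEdge_snd (b : AffineBasis ι ℝ E) {i j : ι} (hij : i ≠ j) (y : E) :
    b.coord j (b.halfEdge i j y) = b.coord j y / 2 := by
  rw [coord_halfEdge, coord_apply_eq, coord_apply_ne _ hij.symm]; ring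

theorem coord_halfEdge_of_ne (b : AffineBasis ι ℝ E) {k i j : ι} (hi : k ≠ i) (hj : k ≠ j)
    (y : E) : b.coord k (b.halfEdge i j y) = b.coord k y := by
  rw [coord_halfEdge, coord_apply_ne _ hi, coord_apply_ne _ hj]; ring

theorem halfEdge_injective (b : AffineBasis ι ℝ E) {i j : ι} (hij : i ≠ j) :
    Function.Injective (b.halfEdge i j) := by
  intro y z h
  have hj : b.coord j y = b.coord j z := by
    have := congrArg (b.coord j) h
    rw [coord_halfEdge_snd _ hij, coord_halfEdge_snd _ hij] at this
    linarith
  simpa [halfEdge, hj] using h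

theorem image_halfEdge_convexHull (b : AffineBasis ι ℝ E) {i j : ι} (hij : i ≠ j) :
    b.halfEdge i j '' convexHull ℝ (Set.range b) =
      convexHull ℝ (Set.range b) ∩ {y | b.coord j y ≤ b.coord i y} := by
  rw [b.convexHull_eq_nonneg_coord]
  ext y
  constructor
  · rintro ⟨z, hz, rfl⟩
    refine ⟨fun k => ?_, ?_⟩
    · by_cases hi : k = i
      · subst hi
        rw [coord_halfEdge_fst _ hij]
        linarith [hz k, hz j]
      · by_cases hj : k = j
        · subst hj
          rw [coord_halfEdge_snd _ hij]
          linarith [hz k]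
        · rw [coord_halfEdge_of_ne _ hi hj]
          exact hz k
    · rw [Set.mem_ofPred_eq, coord_halfEdge_fst _ hij, coord_halfEdge_snd _ hij]
      linarith [hz i]
  · rintro ⟨hy, hle⟩
    rw [Set.mem_ofPred_eq] at hle
    refine ⟨y + (-b.coord j y) • (b i - b j), fun k => ?_, ?_⟩
    · rw [coord_add_smul_sub]
      by_cases hi : k = i
      · subst hi
        rw [coord_apply_eq, coord_apply_ne _ hij]
        linarith
      · by_cases hj : k = j
        · subst hj
          rw [coord_apply_eq, coord_apply_ne _ hij.symm]
          linarith [hy k]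
        · rw [coord_apply_ne _ hi, coord_apply_ne _ hj]
          linarith [hy k]
    · rw [halfEdge, coord_add_smul_sub, coord_apply_eq, coord_apply_ne _ hij.symm]
      module

section Measure

variable [FiniteDimensional ℝ E]

theorem hasFDerivAt_halfEdge (b : AffineBasis ι ℝ E) (i j : ι) (y : E) :
    HasFDerivAt (b.halfEdge i j)
      (LinearMap.transvection (b.coord j).linear
        ((1 / 2 : ℝ) • (b i - b j))).toContinuousLinearMap y := by
  set L := (LinearMap.transvection (b.coord j).linear
        ((1 / 2 : ℝ) • (b i - b j))).toContinuousLinearMap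
  have h : b.halfEdge i j = fun z => L z + (b.coord j 0 / 2) • (b i - b j) := by
    funext z
    have hz := congrFun (b.coord j).decomp z
    simp only [Pi.add_apply] at hz
    simp only [halfEdge, hz, L, LinearMap.coe_toContinuousLinearMap', LinearMap.transvection.apply]
    module
  rw [h]
  exact L.hasFDerivAt.add_const _

variable [MeasurableSpace E] [BorelSpace E]

theorem setIntegral_image_halfEdge (b : AffineBasis ι ℝ E) {i j : ι} (hij : i ≠ j)
    (μ : Measure E) [μ.IsAddHaarMeasure] {s : Set E} (hs : MeasurableSet s) (f : E → ℝ) :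
    ∫ y in b.halfEdge i j '' s, f y ∂μ = (1 / 2) * ∫ y in s, f (b.halfEdge i j y) ∂μ := by
  rw [integral_image_eq_integral_abs_det_fderiv_smul μ hs
    (fun y _ => (b.hasFDerivAt_halfEdge i j y).hasFDerivWithinAt)
    (b.halfEdge_injective hij).injOn]
  have h := (b.coord j).linearMap_vsub (b i) (b j)
  rw [coord_apply_eq, coord_apply_ne _ hij.symm, vsub_eq_sub, vsub_eq_sub] at h
  have hdet : (LinearMap.transvection (b.coord j).linear
      ((1 / 2 : ℝ) • (b i - b j))).toContinuousLinearMap.det = 1 / 2 := by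
    rw [ContinuousLinearMap.det, LinearMap.coe_toContinuousLinearMap, LinearMap.transvection.det,
      map_smul, h]
    norm_num
  rw [hdet, integral_smul, smul_eq_mul]
  norm_num

theorem measure_coord_eq_coord_s2 (b : AffineBasis ι ℝ E) {i j : ι} (hij : i ≠ j)
    (μ : Measure E) [μ.IsAddHaarMeasure] : μ {y | b.coord i y = b.coord j y} = 0 := by
  let A : AffineSubspace ℝ E := (AffineSubspace.mk' (0 : ℝ) ⊥).comap (b.coord i - b.coord j)
  have hA : (A : Set E) = {y | b.coord i y = b.coord j y} := by
    ext y
    simp [A, AffineSubspace.mem_mk', sub_eq_zero]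
  rw [← hA]
  refine Measure.addHaar_affineSubspace μ A fun h => ?_
  have : b i ∈ (A : Set E) := h ▸ Set.mem_univ _
  rw [hA, Set.mem_ofPred_eq, coord_apply_eq, coord_apply_ne _ hij.symm] at this
  exact one_ne_zero this

variable [Finite ι]

/-- Bisecting a simplex at the midpoint of an edge expresses an integral over it as the mean of two
integrals over the same simplex. -/
theorem setIntegral_convexHull_eq_halfEdge (b : AffineBasis ι ℝ E) {i j : ι} (hij : i ≠ j)
    (μ : Measure E) [μ.IsAddHaarMeasure] {f : E → ℝ} (hf : Continuous f) :
    ∫ y in convexHull ℝ (Set.range b), f y ∂μ =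
      (1 / 2) * (∫ y in convexHull ℝ (Set.range b), f (b.halfEdge i j y) ∂μ +
        ∫ y in convexHull ℝ (Set.range b), f (b.halfEdge j i y) ∂μ) := by
  have hS := (Set.finite_range b).isCompact_convexHull ℝ
  have hint := hf.continuousOn.integrableOn_compact (μ := μ) hS
  have hclosed : MeasurableSet {y | b.coord i y ≤ b.coord j y} :=
    (isClosed_le (continuous_barycentric_coord b i)
      (continuous_barycentric_coord b j)).measurableSet
  rw [mul_add, ← b.setIntegral_image_halfEdge hij μ hS.measurableSet,
    ← b.setIntegral_image_halfEdge hij.symm μ hS.measurableSet,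
    image_halfEdge_convexHull _ hij, image_halfEdge_convexHull _ hij.symm,
    ← setIntegral_union₀ _ (hS.measurableSet.inter hclosed).nullMeasurableSet
      (hint.mono_set Set.inter_subset_left) (hint.mono_set Set.inter_subset_left),
    ← Set.inter_union_distrib_left]
  · congr 2
    refine (Set.inter_eq_left.2 fun y _ => ?_).symm
    exact le_total (b.coord j y) (b.coord i y)
  · refine measure_mono_null ?_ (b.measure_coord_eq_coord_s2 hij μ)
    rintro y ⟨⟨-, h₁⟩, -, h₂⟩
    exact le_antisymm h₂ h₁

theorem integrableOn_coord_mul_coord_s2 (b : AffineBasis ι ℝ E) (i j : ι)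
    (μ : Measure E) [μ.IsAddHaarMeasure] :
    IntegrableOn (fun y => b.coord i y * b.coord j y) (convexHull ℝ (Set.range b)) μ :=
  ((continuous_barycentric_coord b i).mul
    (continuous_barycentric_coord b j)).continuousOn.integrableOn_compact
    ((Set.finite_range b).isCompact_convexHull ℝ)

/-- The second moments of the barycentric coordinates over a simplex satisfy
`∫ λᵢ² = ∫ λⱼ² = 2 ∫ λᵢ λⱼ`. -/
theorem setIntegral_coord_mul_coord_relations (b : AffineBasis ι ℝ E) {i j : ι} (hij : i ≠ j)
    (μ : Measure E) [μ.IsAddHaarMeasure] :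
    ∫ y in convexHull ℝ (Set.range b), b.coord i y * b.coord i y ∂μ =
        ∫ y in convexHull ℝ (Set.range b), b.coord j y * b.coord j y ∂μ ∧
      ∫ y in convexHull ℝ (Set.range b), b.coord i y * b.coord i y ∂μ =
        2 * ∫ y in convexHull ℝ (Set.range b), b.coord i y * b.coord j y ∂μ := by
  have hI := fun k l => b.integrableOn_coord_mul_coord_s2 k l μ
  have key := fun k l => b.setIntegral_convexHull_eq_halfEdge hij μ
    ((continuous_barycentric_coord b k).mul (continuous_barycentric_coord b l))
  have comb : ∀ p q r : ℝ, ∫ y in convexHull ℝ (Set.range b), (p * (b.coord i y * b.coord i y) +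
      q * (b.coord i y * b.coord j y) + r * (b.coord j y * b.coord j y)) ∂μ =
      p * ∫ y in convexHull ℝ (Set.range b), b.coord i y * b.coord i y ∂μ +
      q * ∫ y in convexHull ℝ (Set.range b), b.coord i y * b.coord j y ∂μ +
      r * ∫ y in convexHull ℝ (Set.range b), b.coord j y * b.coord j y ∂μ := by
    intro p q r
    have hpq : IntegrableOn (fun y => p * (b.coord i y * b.coord i y) +
        q * (b.coord i y * b.coord j y)) (convexHull ℝ (Set.range b)) μ :=
      ((hI i i).const_mul p).add ((hI i j).const_mul q)
    rw [integral_add hpq ((hI j j).const_mul r),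
      integral_add ((hI i i).const_mul p) ((hI i j).const_mul q),
      integral_const_mul, integral_const_mul, integral_const_mul]
  have hii := key i i
  have hij' := key i j
  simp only [Pi.mul_apply, coord_halfEdge_fst _ hij, coord_halfEdge_snd _ hij,
    coord_halfEdge_fst _ hij.symm, coord_halfEdge_snd _ hij.symm] at hii hij'
  have e₁ := comb 1 1 (1 / 4)
  have e₂ := comb (1 / 4) 0 0
  have e₃ := comb 0 (1 / 2) (1 / 4)
  have e₄ := comb (1 / 4) (1 / 2) 0
  ring_nf at hii hij' e₁ e₂ e₃ e₄ ⊢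
  constructor <;> linarith

theorem sum_sum_setIntegral_coord_mul_coord {ι : Type*} [Fintype ι] (b : AffineBasis ι ℝ E)
    (μ : Measure E) [μ.IsAddHaarMeasure] :
    ∑ i, ∑ j, ∫ y in convexHull ℝ (Set.range b), b.coord i y * b.coord j y ∂μ =
      μ.real (convexHull ℝ (Set.range b)) := by
  calc ∑ i, ∑ j, ∫ y in convexHull ℝ (Set.range b), b.coord i y * b.coord j y ∂μ
      = ∫ y in convexHull ℝ (Set.range b), ∑ i, ∑ j, b.coord i y * b.coord j y ∂μ := by
        rw [integral_finsetSum _ fun i _ => integrable_finsetSum _ fun j _ =>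
          b.integrableOn_coord_mul_coord_s2 i j μ]
        refine Finset.sum_congr rfl fun i _ => ?_
        rw [integral_finsetSum _ fun j _ => b.integrableOn_coord_mul_coord_s2 i j μ]
    _ = μ.real (convexHull ℝ (Set.range b)) := by
        simp [← Finset.mul_sum]

/-- The second moments of the barycentric coordinates over a simplex. -/
theorem setIntegral_coord_mul_coord {ι : Type*} [Fintype ι] [DecidableEq ι]
    (b : AffineBasis ι ℝ E) (μ : Measure E) [μ.IsAddHaarMeasure] (i j : ι) :
    ∫ y in convexHull ℝ (Set.range b), b.coord i y * b.coord j y ∂μ =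
      (1 + if i = j then 1 else 0) *
        (μ.real (convexHull ℝ (Set.range b)) / (Fintype.card ι * (Fintype.card ι + 1))) := by
  set I : ι → ι → ℝ := fun i j =>
    ∫ y in convexHull ℝ (Set.range b), b.coord i y * b.coord j y ∂μ
  obtain ⟨c, hc⟩ : ∃ c, ∀ k l, I k l = (1 + if k = l then 1 else 0) * c := by
    refine ⟨I i i / 2, fun k l => ?_⟩
    have hdiag : I k k = I i i := by
      by_cases h : k = i
      · rw [h]
      · exact (b.setIntegral_coord_mul_coord_relations h μ).1
    by_cases h : k = l
    · subst h
      rw [if_pos rfl, hdiag]; ring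
    · rw [if_neg h, ← hdiag]
      have : I k k = 2 * I k l := (b.setIntegral_coord_mul_coord_relations h μ).2
      linarith
  have hsum : ∑ k, ∑ l, I k l = μ.real (convexHull ℝ (Set.range b)) :=
    b.sum_sum_setIntegral_coord_mul_coord μ
  have hcard : (Fintype.card ι : ℝ) * (Fintype.card ι + 1) ≠ 0 := by
    have : Nonempty ι := ⟨i⟩
    have : (0 : ℝ) < Fintype.card ι := by exact_mod_cast Fintype.card_pos
    positivity
  simp only [hc, ← Finset.sum_mul, Finset.sum_add_distrib, Finset.sum_ite_eq, Finset.mem_univ,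
    if_true, Finset.sum_const, Finset.card_univ, nsmul_eq_mul, mul_one] at hsum
  change I i j = _
  rw [hc i j, ← hsum]
  congr 1
  rw [eq_div_iff hcard]
  ring

/-- The `L²`-norm of an affine function over a simplex in terms of its vertex values. -/
theorem setIntegral_affineMap_sq {ι : Type*} [Fintype ι]
    (b : AffineBasis ι ℝ E) (μ : Measure E) [μ.IsAddHaarMeasure] (g : E →ᵃ[ℝ] ℝ) :
    ∫ y in convexHull ℝ (Set.range b), g y ^ 2 ∂μ =
      (∑ i, g (b i) ^ 2 + (∑ i, g (b i)) ^ 2) *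
        (μ.real (convexHull ℝ (Set.range b)) / (Fintype.card ι * (Fintype.card ι + 1))) := by
  classical
  have hg : ∀ y, g y ^ 2 =
      ∑ i, ∑ j, (g (b i) * g (b j)) * (b.coord i y * b.coord j y) := by
    intro y
    have : g y = ∑ i, g (b i) * b.coord i y := by
      conv_lhs => rw [← b.affineCombination_coord_eq_self y,
        Finset.map_affineCombination _ _ _ (b.sum_coord_apply_eq_one y),
        Finset.affineCombination_eq_linear_combination _ _ _ (b.sum_coord_apply_eq_one y)]
      simp [mul_comm]
    rw [this, sq, Finset.sum_mul_sum]
    exact Finset.sum_congr rfl fun i _ => Finset.sum_congr rfl fun j _ => by ring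
  have hint := fun i j => (b.integrableOn_coord_mul_coord_s2 i j μ).const_mul (g (b i) * g (b j))
  rw [setIntegral_congr_fun ((Set.finite_range b).isCompact_convexHull ℝ).measurableSet
    fun y _ => hg y]
  rw [integral_finsetSum _ fun i _ => integrable_finsetSum _ fun j _ => hint i j,
    Finset.sum_congr rfl fun i _ => integral_finsetSum _ fun j _ => hint i j]
  simp only [integral_const_mul, setIntegral_coord_mul_coord]
  simp only [← mul_assoc, ← Finset.sum_mul]
  congr 1
  simp only [mul_add, mul_one, mul_ite, mul_zero, Finset.sum_add_distrib, Finset.sum_ite_eq,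
    Finset.mem_univ, if_true]
  rw [sq (∑ i, g (b i)), Finset.sum_mul_sum, add_comm]
  simp only [sq]

end Measure

end AffineBasis

/-- On a nondegenerate `d`-simplex `τ` of positive volume in `ℝ^d`,
the value of an affine function at a vertex is controlled by its `L²`-norm over
the simplex: `g(x_k)² ≤ ((d+1)(d+2)/|τ|) · ∫_τ g²`. -/
theorem vertex_value_L2_bound
    (d : ℕ) (hd : 1 ≤ d)
    (x : Fin (d + 1) → EuclideanSpace ℝ (Fin d))
    (hx : AffineIndependent ℝ x)
    (τ : Set (EuclideanSpace ℝ (Fin d)))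
    (hτ : τ = convexHull ℝ (Set.range x))
    (hvol : 0 < (volume τ).toReal)
    (g : EuclideanSpace ℝ (Fin d) →ᵃ[ℝ] ℝ)
    (k : Fin (d + 1)) :
    (g (x k)) ^ 2 ≤
      (((d : ℝ) + 1) * ((d : ℝ) + 2) / (volume τ).toReal) * ∫ y in τ, (g y) ^ 2 := by
  have htop : affineSpan ℝ (Set.range x) = ⊤ :=
    hx.affineSpan_eq_top_iff_card_eq_finrank_add_one.2 (by simp)
  let b : AffineBasis (Fin (d + 1)) ℝ (EuclideanSpace ℝ (Fin d)) := ⟨x, hx, htop⟩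
  have hb : τ = convexHull ℝ (Set.range b) := hτ
  have hint : ∫ y in τ, g y ^ 2 = (∑ i, g (x i) ^ 2 + (∑ i, g (x i)) ^ 2) *
      ((volume τ).toReal / (((d : ℝ) + 1) * ((d : ℝ) + 2))) := by
    have h := b.setIntegral_affineMap_sq volume g
    rw [← hb, Fintype.card_fin] at h
    rw [h, Measure.real]
    push_cast
    rw [add_assoc (d : ℝ) 1 1, one_add_one_eq_two]
    rfl
  rw [hint]
  have hk : g (x k) ^ 2 ≤ ∑ i, g (x i) ^ 2 :=
    Finset.single_le_sum (f := fun i => g (x i) ^ 2) (fun i _ => sq_nonneg _) (Finset.mem_univ k)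
  calc g (x k) ^ 2 ≤ ∑ i, g (x i) ^ 2 + (∑ i, g (x i)) ^ 2 := by
        linarith [sq_nonneg (∑ i, g (x i))]
    _ = _ := by
        field_simp
end

section
/- Let a, b, c, d ∈ ℝ³ be affinely independent, let τ = conv{a,b,c,d}, and for vertices x, y write m_{xy} = (x+y)/2 for the edge midpoint. Consider the eight tetrahedra of regular (red) refinement with the diagonal of the interior octahedron chosen as the segment from m_{ab} to m_{cd}: the four corner tetrahedra T₁ = conv{a, m_{ab}, m_{ac}, m_{ad}}, T₂ = conv{b, m_{ab}, m_{bc}, m_{bd}}, T₃ = conv{c, m_{ac}, m_{bc}, m_{cd}}, T₄ = conv{d, m_{ad}, m_{bd}, m_{cd}}, and the four interior tetrahedra T₅ = conv{m_{ab}, m_{cd}, m_{ac}, m_{bc}}, T₆ = conv{m_{ab}, m_{cd}, m_{bc}, m_{bd}}, T₇ = conv{m_{ab}, m_{cd}, m_{bd}, m_{ad}}, T₈ = conv{m_{ab}, m_{cd}, m_{ad}, m_{ac}}. Then: (i) T₁ ∪ ⋯ ∪ T₈ = τ; (ii) the topological interiors of T₁, …, T₈ are pairwise disjoint; (iii) each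 Tᵢ has Lebesgue volume equal to (1/8)·vol(τ); and (iv) each corner tetrahedron Tᵢ (i = 1,…,4) is the image of τ under the homothety with ratio 1/2 centered at the corresponding vertex. -/
open MeasureTheory

lemma Real.midpoint_eq (x y : ℝ) : midpoint ℝ x y = (x + y) / 2 := by
  rw [midpoint_eq_smul_add, invOf_eq_inv, smul_eq_mul]
  ring

section Interior

variable {E : Type*} [NormedAddCommGroup E] [NormedSpace ℝ E]

/-- Two sets weakly separated by a nonconstant affine function have disjoint interiors. -/
lemma disjoint_interior_of_affineMap_separates (g : E →ᵃ[ℝ] ℝ) {x y : E} (hxy : g x ≠ g y)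
    {r : ℝ} {S S' : Set E} (hS : ∀ z ∈ S, g z ≤ r) (hS' : ∀ z ∈ S', r ≤ g z) :
    Disjoint (interior S) (interior S') := by
  have hlin : Function.Surjective g.linear := by
    refine LinearMap.surjective fun h0 => hxy ?_
    rw [← sub_eq_zero, ← vsub_eq_sub, ← g.linearMap_vsub, h0, LinearMap.zero_apply]
  have hopen : IsOpenMap g :=
    AffineMap.isOpenMap_linear_iff.mp (g.linear.isOpenMap_of_finiteDimensional hlin)
  rw [Set.disjoint_iff_inter_eq_empty, ← interior_inter, ← Set.not_nonempty_iff_eq_empty]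
  rintro ⟨z, hz⟩
  have hsub : g '' interior (S ∩ S') ⊆ interior {r} := by
    refine interior_maximal ?_ (hopen _ isOpen_interior)
    rintro _ ⟨w, hw, rfl⟩
    exact le_antisymm (hS w (interior_subset hw).1) (hS' w (interior_subset hw).2)
  simpa using hsub (Set.mem_image_of_mem g hz)

end Interior

section Hull

variable {E : Type*} [AddCommGroup E] [Module ℝ E]

lemma affineMap_le_of_mem_convexHull (g : E →ᵃ[ℝ] ℝ) {r : ℝ} {s : Set E}
    (hs : ∀ z ∈ s, g z ≤ r) {z : E} (hz : z ∈ convexHull ℝ s) : g z ≤ r :=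
  convexHull_min hs ((convex_Iic r).affine_preimage g) hz

lemma le_affineMap_of_mem_convexHull (g : E →ᵃ[ℝ] ℝ) {r : ℝ} {s : Set E}
    (hs : ∀ z ∈ s, r ≤ g z) {z : E} (hz : z ∈ convexHull ℝ s) : r ≤ g z :=
  convexHull_min hs ((convex_Ici r).affine_preimage g) hz

lemma mem_convexHull_of_eq_sum_smul {p q r s x : E} {w₀ w₁ w₂ w₃ : ℝ}
    (h₀ : 0 ≤ w₀) (h₁ : 0 ≤ w₁) (h₂ : 0 ≤ w₂) (h₃ : 0 ≤ w₃) (hw : w₀ + w₁ + w₂ + w₃ = 1)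
    (hx : x = w₀ • p + w₁ • q + w₂ • r + w₃ • s) : x ∈ convexHull ℝ {p, q, r, s} := by
  have := (convex_convexHull ℝ {p, q, r, s}).sum_mem (t := Finset.univ) (w := ![w₀, w₁, w₂, w₃])
    (z := ![p, q, r, s])
    (by simp [Fin.forall_fin_succ, h₀, h₁, h₂, h₃]) (by simpa [Fin.sum_univ_four] using hw)
    (by intro i _; apply subset_convexHull; fin_cases i <;> simp)
  simpa [Fin.sum_univ_four, hx] using this

lemma exists_eq_sum_smul_of_mem_convexHull {p q r s x : E} (hx : x ∈ convexHull ℝ {p, q, r, s}) :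
    ∃ w₀ w₁ w₂ w₃ : ℝ, 0 ≤ w₀ ∧ 0 ≤ w₁ ∧ 0 ≤ w₂ ∧ 0 ≤ w₃ ∧ w₀ + w₁ + w₂ + w₃ = 1 ∧
      x = w₀ • p + w₁ • q + w₂ • r + w₃ • s := by
  have hrange : Set.range ![p, q, r, s] = {p, q, r, s} := by
    simp only [Matrix.range_cons, Matrix.range_empty, Set.union_empty, Set.singleton_union]
  have hvertices : Set.range ![p, q, r, s] = Fintype.linearCombination ℝ ![p, q, r, s] ''
      Set.range fun i j : Fin 4 => if i = j then (1 : ℝ) else 0 := by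
    rw [← Set.range_comp]
    congr 1
    ext i
    simp [Fintype.linearCombination_apply]
  rw [← hrange, hvertices, ← LinearMap.image_convexHull, convexHull_basis_eq_stdSimplex] at hx
  obtain ⟨w, ⟨hw, hsum⟩, rfl⟩ := hx
  refine ⟨w 0, w 1, w 2, w 3, hw 0, hw 1, hw 2, hw 3, ?_, ?_⟩
  · simpa [Fin.sum_univ_four] using hsum
  · simp [Fintype.linearCombination_apply, Fin.sum_univ_four]

lemma image_homothety_one_half_convexHull (x a b c d : E) :
    AffineMap.homothety x (1 / 2 : ℝ) '' convexHull ℝ {a, b, c, d} =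
      convexHull ℝ {midpoint ℝ x a, midpoint ℝ x b, midpoint ℝ x c, midpoint ℝ x d} := by
  rw [AffineMap.image_convexHull]
  simp only [Set.image_insert_eq, Set.image_singleton, homothety_one_half]

/-- The eight subtetrahedra of red refinement along the diagonal from `m_{ab}` to `m_{cd}`. -/
noncomputable def redChild (a b c d : E) : Fin 8 → Set E := ![
  convexHull ℝ {a, midpoint ℝ a b, midpoint ℝ a c, midpoint ℝ a d},
  convexHull ℝ {b, midpoint ℝ a b, midpoint ℝ b c, midpoint ℝ b d},
  convexHull ℝ {c, midpoint ℝ a c, midpoint ℝ b c, midpoint ℝ c d},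
  convexHull ℝ {d, midpoint ℝ a d, midpoint ℝ b d, midpoint ℝ c d},
  convexHull ℝ {midpoint ℝ a b, midpoint ℝ c d, midpoint ℝ a c, midpoint ℝ b c},
  convexHull ℝ {midpoint ℝ a b, midpoint ℝ c d, midpoint ℝ b c, midpoint ℝ b d},
  convexHull ℝ {midpoint ℝ a b, midpoint ℝ c d, midpoint ℝ b d, midpoint ℝ a d},
  convexHull ℝ {midpoint ℝ a b, midpoint ℝ c d, midpoint ℝ a d, midpoint ℝ a c}]

/-- The corner children are homothetic copies of the parent. -/
lemma redChild_corner_eq_image_homothety (a b c d : E) :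
    redChild a b c d 0 = AffineMap.homothety a (1 / 2 : ℝ) '' convexHull ℝ {a, b, c, d} ∧
      redChild a b c d 1 = AffineMap.homothety b (1 / 2 : ℝ) '' convexHull ℝ {a, b, c, d} ∧
      redChild a b c d 2 = AffineMap.homothety c (1 / 2 : ℝ) '' convexHull ℝ {a, b, c, d} ∧
      redChild a b c d 3 = AffineMap.homothety d (1 / 2 : ℝ) '' convexHull ℝ {a, b, c, d} := by
  simp only [image_homothety_one_half_convexHull, midpoint_self]
  refine ⟨rfl, ?_, ?_, ?_⟩ <;> refine congrArg (convexHull ℝ) ?_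
  · rw [midpoint_comm b a, Set.insert_comm]
  · rw [midpoint_comm c a, midpoint_comm c b]
    ext; simp only [Set.mem_insert_iff, Set.mem_singleton_iff]; tauto
  · rw [midpoint_comm d a, midpoint_comm d b, midpoint_comm d c]
    ext; simp only [Set.mem_insert_iff, Set.mem_singleton_iff]; tauto

lemma iUnion_redChild_subset (a b c d : E) :
    (⋃ i, redChild a b c d i) ⊆ convexHull ℝ {a, b, c, d} := by
  have ha : a ∈ convexHull ℝ {a, b, c, d} := subset_convexHull _ _ (by simp)
  have hb : b ∈ convexHull ℝ {a, b, c, d} := subset_convexHull _ _ (by simp)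
  have hc : c ∈ convexHull ℝ {a, b, c, d} := subset_convexHull _ _ (by simp)
  have hd : d ∈ convexHull ℝ {a, b, c, d} := subset_convexHull _ _ (by simp)
  have hmid : ∀ {x y : E}, x ∈ convexHull ℝ {a, b, c, d} → y ∈ convexHull ℝ {a, b, c, d} →
      midpoint ℝ x y ∈ convexHull ℝ {a, b, c, d} := fun hx hy =>
    Convex.midpoint_mem (convex_convexHull ℝ _) hx hy
  refine Set.iUnion_subset fun i => ?_
  fin_cases i <;> refine convexHull_min ?_ (convex_convexHull ℝ _) <;>
    simp only [Set.insert_subset_iff, Set.singleton_subset_iff, ha, hb, hc, hd, hmid, and_self]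

/-- The parent is covered by the children. -/
lemma convexHull_subset_iUnion_redChild (a b c d : E) :
    convexHull ℝ {a, b, c, d} ⊆ ⋃ i, redChild a b c d i := by
  intro x hx
  obtain ⟨α, β, γ, δ, hα, hβ, hγ, hδ, hsum, rfl⟩ := exists_eq_sum_smul_of_mem_convexHull hx
  rw [Set.mem_iUnion]
  by_cases h0 : 1 / 2 ≤ α
  · refine ⟨0, mem_convexHull_of_eq_sum_smul (w₀ := 2 * α - 1) (w₁ := 2 * β) (w₂ := 2 * γ)
      (w₃ := 2 * δ) ?_ ?_ ?_ ?_ ?_ ?_⟩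
    iterate 5 linarith
    obtain rfl : α = 1 - β - γ - δ := by linarith
    simp only [midpoint_eq_smul_add, invOf_eq_inv]
    module
  by_cases h1 : 1 / 2 ≤ β
  · refine ⟨1, mem_convexHull_of_eq_sum_smul (w₀ := 2 * β - 1) (w₁ := 2 * α) (w₂ := 2 * γ)
      (w₃ := 2 * δ) ?_ ?_ ?_ ?_ ?_ ?_⟩
    iterate 5 linarith
    obtain rfl : α = 1 - β - γ - δ := by linarith
    simp only [midpoint_eq_smul_add, invOf_eq_inv]
    module
  by_cases h2 : 1 / 2 ≤ γ
  · refine ⟨2, mem_convexHull_of_eq_sum_smul (w₀ := 2 * γ - 1) (w₁ := 2 * α) (w₂ := 2 * β)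
      (w₃ := 2 * δ) ?_ ?_ ?_ ?_ ?_ ?_⟩
    iterate 5 linarith
    obtain rfl : α = 1 - β - γ - δ := by linarith
    simp only [midpoint_eq_smul_add, invOf_eq_inv]
    module
  by_cases h3 : 1 / 2 ≤ δ
  · refine ⟨3, mem_convexHull_of_eq_sum_smul (w₀ := 2 * δ - 1) (w₁ := 2 * α) (w₂ := 2 * β)
      (w₃ := 2 * γ) ?_ ?_ ?_ ?_ ?_ ?_⟩
    iterate 5 linarith
    obtain rfl : α = 1 - β - γ - δ := by linarith
    simp only [midpoint_eq_smul_add, invOf_eq_inv]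
    module
  rcases le_total 0 (α - β + γ - δ) with hu | hu <;>
    rcases le_total 0 (-α + β + γ - δ) with hv | hv
  · refine ⟨4, mem_convexHull_of_eq_sum_smul (w₀ := 1 - 2 * γ) (w₁ := 2 * δ)
      (w₂ := α - β + γ - δ) (w₃ := -α + β + γ - δ) ?_ ?_ ?_ ?_ ?_ ?_⟩
    iterate 5 linarith
    obtain rfl : α = 1 - β - γ - δ := by linarith
    simp only [midpoint_eq_smul_add, invOf_eq_inv]
    module
  · refine ⟨7, mem_convexHull_of_eq_sum_smul (w₀ := 2 * β) (w₁ := 1 - 2 * α)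
      (w₂ := α - β - γ + δ) (w₃ := α - β + γ - δ) ?_ ?_ ?_ ?_ ?_ ?_⟩
    iterate 5 linarith
    obtain rfl : α = 1 - β - γ - δ := by linarith
    simp only [midpoint_eq_smul_add, invOf_eq_inv]
    module
  · refine ⟨5, mem_convexHull_of_eq_sum_smul (w₀ := 2 * α) (w₁ := 1 - 2 * β)
      (w₂ := -α + β + γ - δ) (w₃ := -α + β - γ + δ) ?_ ?_ ?_ ?_ ?_ ?_⟩
    iterate 5 linarith
    obtain rfl : α = 1 - β - γ - δ := by linarith
    simp only [midpoint_eq_smul_add, invOf_eq_inv]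
    module
  · refine ⟨6, mem_convexHull_of_eq_sum_smul (w₀ := 1 - 2 * δ) (w₁ := 2 * γ)
      (w₂ := -α + β - γ + δ) (w₃ := α - β - γ + δ) ?_ ?_ ?_ ?_ ?_ ?_⟩
    iterate 5 linarith
    obtain rfl : α = 1 - β - γ - δ := by linarith
    simp only [midpoint_eq_smul_add, invOf_eq_inv]
    module

end Hull

section Disjointness

variable {E : Type*} [NormedAddCommGroup E] [NormedSpace ℝ E]

/-- A corner child meets every other child only along the plane at half height. -/
lemma disjoint_interior_redChild_corner (B : AffineBasis (Fin 4) ℝ E) (k : Fin 4) (j : Fin 8)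
    (hj : j ≠ Fin.castAdd 4 k) :
    Disjoint (interior (redChild (B 0) (B 1) (B 2) (B 3) j))
      (interior (redChild (B 0) (B 1) (B 2) (B 3) (Fin.castAdd 4 k))) := by
  refine disjoint_interior_of_affineMap_separates (B.coord k) (r := 1 / 2) (x := B k)
    (y := B (k + 1)) ?_ (fun z hz => ?_) (fun z hz => ?_)
  · fin_cases k <;> simp [B.coord_apply]
  · fin_cases k <;> fin_cases j <;> first
      | exact absurd rfl hj
      | refine affineMap_le_of_mem_convexHull _ ?_ hz
        norm_num +decide [Real.midpoint_eq, B.coord_apply]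
  · fin_cases k <;> refine le_affineMap_of_mem_convexHull _ ?_ hz <;>
      norm_num +decide [Real.midpoint_eq, B.coord_apply]

/-- The children inside the octahedron are separated by two planes through its diagonal. -/
lemma disjoint_interior_redChild_octahedron (B : AffineBasis (Fin 4) ℝ E) (i j : Fin 4)
    (hij : i < j) :
    Disjoint (interior (redChild (B 0) (B 1) (B 2) (B 3) (Fin.natAdd 4 j)))
      (interior (redChild (B 0) (B 1) (B 2) (B 3) (Fin.natAdd 4 i))) := by
  have hu : (B.coord 0 - B.coord 1 + B.coord 2 - B.coord 3) (B 0) ≠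
      (B.coord 0 - B.coord 1 + B.coord 2 - B.coord 3) (B 1) := by
    norm_num +decide [B.coord_apply]
  have hv : (B.coord 1 - B.coord 0 + B.coord 2 - B.coord 3) (B 0) ≠
      (B.coord 1 - B.coord 0 + B.coord 2 - B.coord 3) (B 1) := by
    norm_num +decide [B.coord_apply]
  fin_cases i <;> fin_cases j <;> first
    | exact absurd hij (by decide)
    | refine disjoint_interior_of_affineMap_separates _ hu (r := 0)
        (fun z hz => affineMap_le_of_mem_convexHull _ ?_ hz)
        (fun z hz => le_affineMap_of_mem_convexHull _ ?_ hz) <;>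
      norm_num +decide [Real.midpoint_eq, B.coord_apply] <;> done
    | refine disjoint_interior_of_affineMap_separates _ hv (r := 0)
        (fun z hz => affineMap_le_of_mem_convexHull _ ?_ hz)
        (fun z hz => le_affineMap_of_mem_convexHull _ ?_ hz) <;>
      norm_num +decide [Real.midpoint_eq, B.coord_apply] <;> done
    | refine (disjoint_interior_of_affineMap_separates _ hu (r := 0)
        (fun z hz => affineMap_le_of_mem_convexHull _ ?_ hz)
        (fun z hz => le_affineMap_of_mem_convexHull _ ?_ hz)).symm <;>
      norm_num +decide [Real.midpoint_eq, B.coord_apply]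

lemma disjoint_interior_redChild (B : AffineBasis (Fin 4) ℝ E) (i j : Fin 8) (hij : i ≠ j) :
    Disjoint (interior (redChild (B 0) (B 1) (B 2) (B 3) i))
      (interior (redChild (B 0) (B 1) (B 2) (B 3) j)) := by
  induction i using Fin.addCases (m := 4) (n := 4) with
  | left k => exact (disjoint_interior_redChild_corner B k j hij.symm).symm
  | right k =>
    induction j using Fin.addCases (m := 4) (n := 4) with
    | left l => exact disjoint_interior_redChild_corner B l _ hij
    | right l =>
      rcases lt_or_gt_of_ne (fun h => hij (congrArg _ h) : k ≠ l) with h | h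
      · exact (disjoint_interior_redChild_octahedron B k l h).symm
      · exact disjoint_interior_redChild_octahedron B l k h

end Disjointness

section Volume

variable {E : Type*} [NormedAddCommGroup E] [NormedSpace ℝ E] [FiniteDimensional ℝ E]
  [MeasurableSpace E] [BorelSpace E] (μ : Measure E) [μ.IsAddHaarMeasure]

/-- The volume of a tetrahedron whose edge vectors have coordinate matrix `M` relative to the edge
vectors of a nondegenerate tetrahedron. -/
lemma addHaar_convexHull_eq_det_mul (v : Module.Basis (Fin 3) ℝ E) (M : Matrix (Fin 3) (Fin 3) ℝ)
    {a b c d p q r s : E} (hb : v 0 = b - a) (hc : v 1 = c - a) (hd : v 2 = d - a)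
    (hq : q - p = ∑ i, M i 0 • v i) (hr : r - p = ∑ i, M i 1 • v i)
    (hs : s - p = ∑ i, M i 2 • v i) :
    μ (convexHull ℝ {p, q, r, s}) = ENNReal.ofReal |M.det| * μ (convexHull ℝ {a, b, c, d}) := by
  set L := Matrix.toLin v v M with hL
  rw [← Matrix.toLin_self v v, ← hL] at hq hr hs
  rw [hb, map_sub] at hq
  rw [hc, map_sub] at hr
  rw [hd, map_sub] at hs
  let A : E →ᵃ[ℝ] E := AffineMap.const ℝ E (p - L a) + L.toAffineMap
  have hp' : A a = p := by simp [A]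
  have hq' : A b = q := by rw [sub_eq_iff_eq_add.mp hq]; simp [A]; abel
  have hr' : A c = r := by rw [sub_eq_iff_eq_add.mp hr]; simp [A]; abel
  have hs' : A d = s := by rw [sub_eq_iff_eq_add.mp hs]; simp [A]; abel
  have himage : convexHull ℝ {p, q, r, s} =
      (fun y => (p - L a) + y) '' (L '' convexHull ℝ {a, b, c, d}) := by
    have hA : (fun y => (p - L a) + L y) = A := rfl
    rw [Set.image_image, hA, A.image_convexHull]
    simp only [Set.image_insert_eq, Set.image_singleton, hp', hq', hr', hs']
  rw [himage, Set.image_add_left, measure_preimage_add, Measure.addHaar_image_linearMap,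
    LinearMap.det_toLin]

lemma addHaar_redChild_corner (hE : Module.finrank ℝ E = 3) (a b c d : E) (k : Fin 4) :
    μ (redChild a b c d (Fin.castAdd 4 k)) = μ (convexHull ℝ {a, b, c, d}) / 8 := by
  have hvol : ∀ x : E, μ (AffineMap.homothety x (1 / 2 : ℝ) '' convexHull ℝ {a, b, c, d}) =
      μ (convexHull ℝ {a, b, c, d}) / 8 := by
    intro x
    rw [Measure.addHaar_image_homothety, hE, ENNReal.div_eq_inv_mul,
      show |(1 / 2 : ℝ) ^ 3| = 8⁻¹ by norm_num [abs_of_pos],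
      ENNReal.ofReal_inv_of_pos (by norm_num), ENNReal.ofReal_ofNat]
  obtain ⟨h0, h1, h2, h3⟩ := redChild_corner_eq_image_homothety a b c d
  fin_cases k
  · exact h0 ▸ hvol a
  · exact h1 ▸ hvol b
  · exact h2 ▸ hvol c
  · exact h3 ▸ hvol d

lemma addHaar_redChild_octahedron (v : Module.Basis (Fin 3) ℝ E) {a b c d : E}
    (hb : v 0 = b - a) (hc : v 1 = c - a) (hd : v 2 = d - a) (k : Fin 4) :
    μ (redChild a b c d (Fin.natAdd 4 k)) = μ (convexHull ℝ {a, b, c, d}) / 8 := by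
  have hvol : ∀ (M : Matrix (Fin 3) (Fin 3) ℝ) {p q r s : E}, |M.det| = 8⁻¹ →
      q - p = ∑ i, M i 0 • v i → r - p = ∑ i, M i 1 • v i → s - p = ∑ i, M i 2 • v i →
      μ (convexHull ℝ {p, q, r, s}) = μ (convexHull ℝ {a, b, c, d}) / 8 := by
    intro M p q r s hM hq hr hs
    rw [addHaar_convexHull_eq_det_mul μ v M hb hc hd hq hr hs, hM, ENNReal.div_eq_inv_mul,
      ENNReal.ofReal_inv_of_pos (by norm_num), ENNReal.ofReal_ofNat]
  fin_cases k
  · refine hvol !![-1/2, -1/2, 0; 1/2, 1/2, 1/2; 1/2, 0, 0] ?_ ?_ ?_ ?_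
    · simp [Matrix.det_fin_three]
      norm_num [abs_of_pos, abs_of_neg]
    all_goals
      simp [Fin.sum_univ_three, hb, hc, hd, midpoint_eq_smul_add]
      module
  · refine hvol !![-1/2, 0, 0; 1/2, 1/2, 0; 1/2, 0, 1/2] ?_ ?_ ?_ ?_
    · simp [Matrix.det_fin_three]
      norm_num [abs_of_pos, abs_of_neg]
    all_goals
      simp [Fin.sum_univ_three, hb, hc, hd, midpoint_eq_smul_add]
      module
  · refine hvol !![-1/2, 0, -1/2; 1/2, 0, 0; 1/2, 1/2, 1/2] ?_ ?_ ?_ ?_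
    · simp [Matrix.det_fin_three]
      norm_num [abs_of_pos, abs_of_neg]
    all_goals
      simp [Fin.sum_univ_three, hb, hc, hd, midpoint_eq_smul_add]
      module
  · refine hvol !![-1/2, -1/2, -1/2; 1/2, 0, 1/2; 1/2, 1/2, 0] ?_ ?_ ?_ ?_
    · simp [Matrix.det_fin_three]
      norm_num [abs_of_pos, abs_of_neg]
    all_goals
      simp [Fin.sum_univ_three, hb, hc, hd, midpoint_eq_smul_add]
      module

/-- Every child has one eighth of the volume of its parent. -/
lemma addHaar_redChild (B : AffineBasis (Fin 4) ℝ E) (i : Fin 8) :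
    μ (redChild (B 0) (B 1) (B 2) (B 3) i) = μ (convexHull ℝ {B 0, B 1, B 2, B 3}) / 8 := by
  let v : Module.Basis (Fin 3) ℝ E := (B.basisOf 0).reindex (finSuccAboveEquiv 0).symm
  have hE : Module.finrank ℝ E = 3 := by simp [Module.finrank_eq_card_basis v]
  have hv : ∀ k : Fin 3, v k = B k.succ - B 0 := fun k => by
    simp [v, finSuccAboveEquiv_apply]
  induction i using Fin.addCases (m := 4) (n := 4) with
  | left k => exact addHaar_redChild_corner μ hE _ _ _ _ k
  | right k => exact addHaar_redChild_octahedron μ v (hv 0) (hv 1) (hv 2) k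

end Volume

/-- Regular (red) refinement of a nondegenerate tetrahedron
`τ = conv{a,b,c,d}` in `ℝ³` with the interior-octahedron diagonal from
`m_{ab}` to `m_{cd}`: the eight children cover `τ`, have pairwise disjoint
interiors, each has volume `vol(τ)/8`, and each corner child is the image of
`τ` under the homothety of ratio `1/2` centered at the corresponding vertex. -/
theorem red_refinement_tetrahedron
    (a b c d : EuclideanSpace ℝ (Fin 3))
    (h : AffineIndependent ℝ ![a, b, c, d])
    (T : Fin 8 → Set (EuclideanSpace ℝ (Fin 3)))
    (hT : T = ![
      convexHull ℝ {a, midpoint ℝ a b, midpoint ℝ a c, midpoint ℝ a d},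
      convexHull ℝ {b, midpoint ℝ a b, midpoint ℝ b c, midpoint ℝ b d},
      convexHull ℝ {c, midpoint ℝ a c, midpoint ℝ b c, midpoint ℝ c d},
      convexHull ℝ {d, midpoint ℝ a d, midpoint ℝ b d, midpoint ℝ c d},
      convexHull ℝ {midpoint ℝ a b, midpoint ℝ c d, midpoint ℝ a c, midpoint ℝ b c},
      convexHull ℝ {midpoint ℝ a b, midpoint ℝ c d, midpoint ℝ b c, midpoint ℝ b d},
      convexHull ℝ {midpoint ℝ a b, midpoint ℝ c d, midpoint ℝ b d, midpoint ℝ a d},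
      convexHull ℝ {midpoint ℝ a b, midpoint ℝ c d, midpoint ℝ a d, midpoint ℝ a c}]) :
    (⋃ i, T i) = convexHull ℝ {a, b, c, d} ∧
      (∀ i j, i ≠ j → Disjoint (interior (T i)) (interior (T j))) ∧
      (∀ i, volume (T i) = volume (convexHull ℝ {a, b, c, d}) / 8) ∧
      (T 0 = AffineMap.homothety a (1 / 2 : ℝ) '' convexHull ℝ {a, b, c, d} ∧
        T 1 = AffineMap.homothety b (1 / 2 : ℝ) '' convexHull ℝ {a, b, c, d} ∧
        T 2 = AffineMap.homothety c (1 / 2 : ℝ) '' convexHull ℝ {a, b, c, d} ∧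
        T 3 = AffineMap.homothety d (1 / 2 : ℝ) '' convexHull ℝ {a, b, c, d}) := by
  have htop : affineSpan ℝ (Set.range ![a, b, c, d]) = ⊤ :=
    h.affineSpan_eq_top_iff_card_eq_finrank_add_one.mpr (by simp)
  let B : AffineBasis (Fin 4) ℝ (EuclideanSpace ℝ (Fin 3)) := ⟨![a, b, c, d], h, htop⟩
  obtain rfl : T = redChild a b c d := hT
  exact ⟨(iUnion_redChild_subset a b c d).antisymm (convexHull_subset_iUnion_redChild a b c d),
    disjoint_interior_redChild B, addHaar_redChild volume B,
    redChild_corner_eq_image_homothety a b c d⟩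
end
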